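/- arXiv:math/0401310 — 2 statements merged into one kernel-verified Lean document; each statement's English description precedes it below -/
import Mathlib

section
/- For k > 2, the largest zero x_{kk} of the Hermite polynomial H_k satisfies x_{kk} > \sqrt{2k} - (9/4)(2k)^{-1/6}. -/
/-!
The function `y = exp (-x²/2) H_k` solves `y'' + (2k+1-x²) y = 0`, so its logarithmic derivative
`v = H_k'/H_k - x` satisfies the Riccati equation `v' = -v² - (2k+1-x²)` wherever `H_k ≠ 0`
(`physHermite_ode`). If `H_k` has no zero on `[c, ∞)`, then for the test function
`φ(t) = t (b-t)`, which vanishes at both ends, Picone's identity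
`(φ² v)' = φ'² - (2k+1-x²) φ² - (φ' - φ v)²` with `x = c + t` integrates to
`0 ≤ ∫₀ᵇ (φ'² - (2k+1-(c+t)²) φ²)`, that is, `2k+1-c² ≤ 10/b² + c b + 2b²/7`
(`zero_free_interval_bound`).

Put `s = (2k)^(1/6)` and `a = s³ - 9/(4s)`. If the largest zero were at most `a`, this bound would
hold for all `c > a`, hence in the limit for `c = a`; with `b = 3/s` it reads
`9/2 s² + 1 - 81/(16 s²) ≤ 37/9 s² - 117/(28 s²)`, which is false for `s ≥ 1`.
-/

open Polynomial

/-- Physicists' Hermite polynomials: `H 0 = 1`, `H 1 = 2X`,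
`H (n+2) = 2X * H (n+1) - 2(n+1) * H n`. -/
noncomputable def physHermite : ℕ → Polynomial ℝ
  | 0 => 1
  | 1 => C 2 * X
  | (n + 2) => C 2 * X * physHermite (n + 1) - C (2 * (n + 1) : ℝ) * physHermite n

lemma physHermite_step (n : ℕ) :
    derivative (physHermite (n + 1)) = C (2 * (n + 1) : ℝ) * physHermite n ∧
      physHermite (n + 1) = C 2 * X * physHermite n - derivative (physHermite n) := by
  induction n with
  | zero => simp [physHermite]
  | succ n ih =>
    obtain ⟨h1, h2⟩ := ih
    have h3 : physHermite (n + 1 + 1) =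
        C 2 * X * physHermite (n + 1) - C (2 * (n + 1) : ℝ) * physHermite n := by
      rw [physHermite]
    refine ⟨?_, by rw [h3, h1]⟩
    have h4 : derivative (physHermite (n + 1 + 1)) =
        C 2 * physHermite (n + 1) + C 2 * X * derivative (physHermite (n + 1))
          - C (2 * (n + 1) : ℝ) * derivative (physHermite n) := by
      rw [h3]; simp
    have h5 : derivative (physHermite n) = C 2 * X * physHermite n - physHermite (n + 1) := by
      rw [h2]; ring
    rw [h4, h1, h5]
    simp only [map_mul, map_add, map_one, map_natCast, Nat.cast_add, Nat.cast_one]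
    ring

/-- Hermite's differential equation `H_k'' = 2x H_k' - 2k H_k`. -/
lemma physHermite_ode (k : ℕ) (x : ℝ) :
    (derivative (derivative (physHermite k))).eval x =
      2 * x * (derivative (physHermite k)).eval x - 2 * k * (physHermite k).eval x := by
  obtain ⟨h1, h2⟩ := physHermite_step k
  have h3 := congrArg (fun p => (derivative p).eval x) h2
  simp only [h1] at h3
  simp at h3
  linarith

/-- Sturm–Picone comparison with the test function `t (b - t)`, multiplied through by `b⁵ / 30`. -/
lemma zero_free_interval_bound (k : ℕ) (c b : ℝ) (hb : 0 < b)
    (h : ∀ x, c ≤ x → (physHermite k).eval x ≠ 0) :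
    0 ≤ b ^ 3 / 3 - (2 * k + 1 - c ^ 2) * (b ^ 5 / 30) + 2 * c * (b ^ 6 / 60) + b ^ 7 / 105 := by
  set H := physHermite k with hH
  -- `F` is the antiderivative of `φ'² - (2k+1-(c+t)²) φ²` vanishing at `0`.
  let F : ℝ → ℝ := fun t => (b ^ 2 * t - 2 * b * t ^ 2 + 4 / 3 * t ^ 3)
    - (2 * k + 1 - c ^ 2) * (b ^ 2 / 3 * t ^ 3 - b / 2 * t ^ 4 + 1 / 5 * t ^ 5)
    + 2 * c * (b ^ 2 / 4 * t ^ 4 - 2 * b / 5 * t ^ 5 + 1 / 6 * t ^ 6)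
    + (b ^ 2 / 5 * t ^ 5 - b / 3 * t ^ 6 + 1 / 7 * t ^ 7)
  have hF : ∀ t, HasDerivAt F ((b - 2 * t) ^ 2
      - (2 * k + 1 - (c + t) ^ 2) * (t * (b - t)) ^ 2) t := by
    intro t
    have hp : ∀ n : ℕ, HasDerivAt (fun t : ℝ => t ^ n) (n * t ^ (n - 1)) t :=
      fun n => hasDerivAt_pow n t
    have := ((((((hasDerivAt_id' t).const_mul (b ^ 2)).sub ((hp 2).const_mul (2 * b))).add
      ((hp 3).const_mul (4 / 3))).sub
      (((((hp 3).const_mul (b ^ 2 / 3)).sub ((hp 4).const_mul (b / 2))).add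
        ((hp 5).const_mul (1 / 5))).const_mul (2 * k + 1 - c ^ 2))).add
      (((((hp 4).const_mul (b ^ 2 / 4)).sub ((hp 5).const_mul (2 * b / 5))).add
        ((hp 6).const_mul (1 / 6))).const_mul (2 * c))).add
      ((((hp 5).const_mul (b ^ 2 / 5)).sub ((hp 6).const_mul (b / 3))).add
        ((hp 7).const_mul (1 / 7)))
    refine HasDerivAt.congr_deriv (f := F) this ?_
    push_cast
    norm_num
    ring
  let D : ℝ → ℝ := fun t =>
    (t * (b - t)) ^ 2 * ((derivative H).eval (c + t) / H.eval (c + t) - (c + t)) - F t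
  have hD : ∀ t, 0 ≤ t → HasDerivAt D (-((b - 2 * t) - (t * (b - t)) *
      ((derivative H).eval (c + t) / H.eval (c + t) - (c + t))) ^ 2) t := by
    intro t ht
    have hne : H.eval (c + t) ≠ 0 := h _ (by linarith)
    have hs : HasDerivAt (fun t : ℝ => c + t) 1 t := (hasDerivAt_id' t).const_add c
    have e1 : HasDerivAt (fun t : ℝ => H.eval (c + t)) ((derivative H).eval (c + t) * 1) t :=
      (H.hasDerivAt (c + t)).comp t hs
    have e2 : HasDerivAt (fun t : ℝ => (derivative H).eval (c + t))
        ((derivative (derivative H)).eval (c + t) * 1) t :=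
      ((derivative H).hasDerivAt (c + t)).comp t hs
    have e3 : HasDerivAt (fun t : ℝ => t * (b - t)) (1 * (b - t) + t * (-1)) t :=
      (hasDerivAt_id' t).mul ((hasDerivAt_id' t).const_sub b)
    have := ((e3.pow 2).mul ((e2.div e1 hne).sub hs)).sub (hF t)
    refine HasDerivAt.congr_deriv (f := D) this ?_
    rw [hH, physHermite_ode, ← hH]
    simp
    field_simp
    ring
  have hanti : AntitoneOn D (Set.Icc 0 b) := by
    apply antitoneOn_of_deriv_nonpos (convex_Icc 0 b)
    · exact fun t ht => (hD t ht.1).continuousAt.continuousWithinAt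
    · intro t ht
      rw [interior_Icc] at ht
      exact (hD t ht.1.le).differentiableAt.differentiableWithinAt
    · intro t ht
      rw [interior_Icc] at ht
      rw [(hD t ht.1.le).deriv]
      exact neg_nonpos.2 (sq_nonneg _)
  have := hanti (Set.left_mem_Icc.2 hb.le) (Set.right_mem_Icc.2 hb.le) hb.le
  simp [D, F] at this
  nlinarith [this]

theorem hermite_largest_zero_lower (k : ℕ) (hk : 2 < k) (w : ℝ)
    (hw : (physHermite k).eval w = 0)
    (hmax : ∀ z : ℝ, (physHermite k).eval z = 0 → z ≤ w) :
    Real.sqrt (2 * k) - 9 / 4 * (2 * (k : ℝ)) ^ (-(1 : ℝ) / 6) < w := by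
  have hk' : (1 : ℝ) ≤ 2 * k := by
    have : (2 : ℝ) < k := by exact_mod_cast hk
    linarith
  have hk0 : (0 : ℝ) ≤ 2 * k := by linarith
  obtain ⟨s, hs⟩ : ∃ s : ℝ, s = (2 * (k : ℝ)) ^ ((1 : ℝ) / 6) := ⟨_, rfl⟩
  have hs1 : 1 ≤ s := hs ▸ Real.one_le_rpow hk' (by norm_num)
  have hs0 : 0 < s := by linarith
  have hs6 : s ^ 6 = 2 * k := by
    rw [hs, ← Real.rpow_natCast, ← Real.rpow_mul hk0]; norm_num
  have hsqrt : Real.sqrt (2 * k) = s ^ 3 := by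
    rw [← hs6, show s ^ 6 = (s ^ 3) ^ 2 by ring, Real.sqrt_sq (by positivity)]
  have hinv : (2 * (k : ℝ)) ^ (-(1 : ℝ) / 6) = s⁻¹ := by
    rw [hs, ← Real.rpow_neg hk0]; norm_num
  rw [hsqrt, hinv]
  by_contra! hcon
  obtain ⟨a, ha⟩ : ∃ a, a = s ^ 3 - 9 / 4 * s⁻¹ := ⟨_, rfl⟩
  rw [← ha] at hcon
  obtain ⟨b, hb⟩ : ∃ b, b = 3 / s := ⟨_, rfl⟩
  have hb0 : 0 < b := by rw [hb]; positivity
  -- When `w = a` the polynomial vanishes at `a` itself, so the bound is a limit from the right.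
  have key : 0 ≤ b ^ 3 / 3 - (2 * k + 1 - a ^ 2) * (b ^ 5 / 30) + 2 * a * (b ^ 6 / 60)
      + b ^ 7 / 105 := by
    have hc : Continuous fun c : ℝ => b ^ 3 / 3 - (2 * k + 1 - c ^ 2) * (b ^ 5 / 30)
        + 2 * c * (b ^ 6 / 60) + b ^ 7 / 105 := by fun_prop
    refine ge_of_tendsto ((hc.tendsto a).mono_left (nhdsWithin_le_nhds (s := Set.Ioi a))) ?_
    filter_upwards [self_mem_nhdsWithin] with c hac
    refine zero_free_interval_bound k c b hb0 fun x hx h0 => ?_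
    have h1 := hmax x h0
    have h2 : a < c := hac
    linarith
  have e : (b ^ 3 / 3 - (2 * k + 1 - a ^ 2) * (b ^ 5 / 30) + 2 * a * (b ^ 6 / 60)
      + b ^ 7 / 105) * s ^ 7 =
      243 / 30 * ((37 / 9 - 9 / 2) * s ^ 4 - s ^ 2 + (81 / 16 - 117 / 28)) := by
    rw [← hs6, ha, hb]
    field_simp
    ring
  have h7 := mul_nonneg key (by positivity : (0 : ℝ) ≤ s ^ 7)
  rw [e] at h7
  have h2 : 1 ≤ s ^ 2 := one_le_pow₀ hs1
  have h4 : 1 ≤ s ^ 4 := one_le_pow₀ hs1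
  linarith
end

section
/- For k \ge 6, with C_k defined by C_k = 2k\sqrt{4k-2}\,(k!)^2/(\sqrt{8k^2-8k+3}\,((k/2)!)^2) for k even and C_k = \sqrt{16k^2-16k+6}\, k!(k-1)!/(\sqrt{2k-1}\,(((k-1)/2)!)^2) for k odd, the quantity M_k = (2k)^{1/6} \max_x (H_k(x))^2 e^{-x^2} satisfies M_k < (2/3) C_k \exp((15/8)(1 + 12/(4(2k)^{1/3} - 9))), assuming the upper bound (H_k(x))^2 e^{-x^2} \le C_k F_k(y) G_k(y) for x^2 < 2k - 3/2 (with y = 2k - x^2) where F_k(y) = (2y^2-4y+3)/\sqrt{y(4y^4-12y^3+9y^2+10ky-12k)} and G_k(y) = \exp(15(2k-y)/(2y(2y-3)^2)). -/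
/-!
Write `y = 2k - x²`. For `y > 3/2` the hypothesis bounds `H_k(x)² e^{-x²}` by
`C_k F_k(y) G_k(y)`, and `F_k G_k` is decreasing on `[2, 2k]` (`antitoneOn_logFG`), so it is
enough to bound `y` from below at a point `ω` where `H_k(x)² e^{-x²}` is maximal.

Such a point satisfies `H_k'(ω) = ω H_k(ω)`. As `H_k` has only real zeros `a`
(`splits_physHermite`), the numbers `u_a = 1 / (ω - a)` are real, and the Hermite equation gives
`∑ u_a² = 2k - ω² = y` and `∑ u_a³ = ω`. From `(∑ u_a³)² ≤ (∑ u_a²)³` follows `ω² ≤ y³`, that is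
`y³ + y ≥ 2k` (`critical_point_bound`). Hence `y ≥ y₀`, where `y₀³ + y₀ = 2k`.

At `y₀` the variable `k` can be eliminated from `F_k` and `G_k`, and with
`y₀ ≤ (2k)^{1/3} ≤ y₀ + 1/(3y₀)` the estimates `F_k(y₀) < (2/3) (2k)^{-1/6}` (`Fk_bound`) and
`G_k(y₀) ≤ exp (15/8 (1 + 12 / (4 (2k)^{1/3} - 9)))` (`Gk_bound`) become polynomial inequalities
in `y₀ ≥ 2`.
-/

open Polynomial

noncomputable def Ck (k : ℕ) : ℝ :=
  if k % 2 = 0 then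
    2 * k * Real.sqrt (4 * k - 2) * (Nat.factorial k : ℝ) ^ 2 /
      (Real.sqrt (8 * (k : ℝ) ^ 2 - 8 * k + 3) * (Nat.factorial (k / 2) : ℝ) ^ 2)
  else
    Real.sqrt (16 * (k : ℝ) ^ 2 - 16 * k + 6) *
        (Nat.factorial k : ℝ) * (Nat.factorial (k - 1) : ℝ) /
      (Real.sqrt (2 * (k : ℝ) - 1) * (Nat.factorial ((k - 1) / 2) : ℝ) ^ 2)

noncomputable def Fk (k : ℕ) (y : ℝ) : ℝ :=
  (2 * y ^ 2 - 4 * y + 3) /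
    Real.sqrt (y * (4 * y ^ 4 - 12 * y ^ 3 + 9 * y ^ 2 + 10 * k * y - 12 * k))

noncomputable def Gk (k : ℕ) (y : ℝ) : ℝ :=
  Real.exp (15 * (2 * k - y) / (2 * y * (2 * y - 3) ^ 2))

/-! ### Hermite polynomials: derivative, differential equation, real zeros -/

theorem derivative_physHermite_succ (n : ℕ) :
    derivative (physHermite (n + 1)) = C (2 * ((n : ℝ) + 1)) * physHermite n := by
  induction n using Nat.strong_induction_on with
  | _ n ih =>
    match n with
    | 0 => simp [physHermite]
    | 1 =>
      simp only [physHermite, derivative_sub, derivative_mul, derivative_C, derivative_X,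
        derivative_one, map_mul, map_add, map_one, Nat.cast_one, Nat.cast_zero, map_zero]
      simp only [map_ofNat]
      ring
    | n + 2 =>
      have h1 := ih (n + 1) (by omega)
      have h0 := ih n (by omega)
      rw [physHermite, derivative_sub, derivative_mul, derivative_C_mul, derivative_C_mul, h1, h0]
      have h2 : physHermite (n + 2) = C 2 * X * physHermite (n + 1)
        - C (2 * (n + 1) : ℝ) * physHermite n := by rw [physHermite]
      rw [h2]
      simp only [derivative_X, map_mul, map_add, map_natCast, map_one, Nat.cast_add, Nat.cast_one,
        map_ofNat]
      ring

theorem physHermite_succ (n : ℕ) :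
    physHermite (n + 1) = C 2 * X * physHermite n - derivative (physHermite n) := by
  cases n with
  | zero => simp [physHermite]
  | succ n => rw [derivative_physHermite_succ, physHermite]

theorem physHermite_ne_zero (n : ℕ) : physHermite n ≠ 0 := by
  induction n with
  | zero => simp [physHermite]
  | succ n ih =>
    intro h
    have h1 := derivative_physHermite_succ n
    rw [h, derivative_zero] at h1
    have h2 : C (2 * ((n : ℝ) + 1)) ≠ 0 := by
      rw [Ne, C_eq_zero]; positivity
    exact mul_ne_zero h2 ih h1.symm

/-- The Hermite differential equation `H'' = 2 X H' - 2 n H`. -/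
theorem physHermite_ode_s19 (n : ℕ) :
    derivative (derivative (physHermite n)) =
      C 2 * X * derivative (physHermite n) - C (2 * (n : ℝ)) * physHermite n := by
  have h := derivative_physHermite_succ n
  rw [physHermite_succ, derivative_sub, derivative_mul, derivative_C_mul, derivative_X] at h
  have h' := sub_eq_iff_eq_add.mp h
  simp only [map_mul, map_add, map_natCast, map_one, map_ofNat] at h' ⊢
  linear_combination -h'

/-- `p ↦ 2Xp - p'` preserves real-rootedness: at a non-real zero `z` one would have
`2z = ∑ 1 / (z - a)` over the real zeros `a` of `p`, and the two sides have imaginary parts of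
opposite sign. -/
theorem splits_two_mul_X_mul_sub_derivative {p : ℝ[X]} (hp : p.Splits) :
    (C 2 * X * p - derivative p).Splits := by
  refine Splits.of_splits_map Complex.ofRealHom (IsAlgClosed.splits _) fun z hz ↦ ?_
  have hz0 := isRoot_of_mem_roots hz
  set P := p.map Complex.ofRealHom with hP
  have hPs : P.Splits := IsAlgClosed.splits _
  have hroots : P.roots = p.roots.map Complex.ofRealHom := hp.roots_map _
  have hp0 : p ≠ 0 := by
    rintro rfl
    simp at hz
  have hP0 : P ≠ 0 := (Polynomial.map_ne_zero_iff Complex.ofRealHom.injective).2 hp0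
  by_contra hreal
  have him : z.im ≠ 0 := by
    intro h
    exact hreal ⟨z.re, by apply Complex.ext <;> simp [h]⟩
  have hPz : P.eval z ≠ 0 := by
    intro h
    have : z ∈ P.roots := (mem_roots hP0).2 h
    rw [hroots, Multiset.mem_map] at this
    obtain ⟨a, -, rfl⟩ := this
    exact hreal ⟨a, rfl⟩
  have hd := hPs.eval_derivative_eq_eval_mul_sum hPz
  have hz1 : 2 * z * P.eval z - (derivative P).eval z = 0 := by
    have := hz0
    simp only [IsRoot.def, Polynomial.map_sub, Polynomial.map_mul, map_C, map_X, eval_sub,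
      eval_mul, eval_C, eval_X, ← derivative_map, ← hP] at this
    simpa only [map_ofNat] using this
  have hsum : 2 * z = (P.roots.map fun a ↦ 1 / (z - a)).sum := by
    rw [hd] at hz1
    apply mul_left_cancel₀ hPz
    linear_combination hz1
  have key : ∀ s : Multiset ℝ,
      z.im * ((s.map Complex.ofRealHom).map fun a ↦ 1 / (z - a)).sum.im ≤ 0 := by
    intro s
    induction s using Multiset.induction_on with
    | empty => simp
    | cons a s ih =>
      simp only [Multiset.map_cons, Multiset.sum_cons, Complex.add_im, mul_add] at ih ⊢
      have : z.im * (1 / (z - Complex.ofRealHom a)).im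
          = -(z.im ^ 2 / Complex.normSq (z - Complex.ofRealHom a)) := by
        rw [one_div, Complex.inv_im]
        simp
        ring
      have h2 : 0 ≤ z.im ^ 2 / Complex.normSq (z - Complex.ofRealHom a) :=
        div_nonneg (sq_nonneg _) (Complex.normSq_nonneg _)
      linarith
  have h3 := key p.roots
  rw [← hroots, ← hsum] at h3
  have h4 : (2 * z).im = 2 * z.im := by simp
  rw [h4] at h3
  have : 0 < z.im ^ 2 := by positivity
  nlinarith

theorem splits_physHermite (n : ℕ) : (physHermite n).Splits := by
  induction n with
  | zero => simp [physHermite]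
  | succ n ih =>
    rw [physHermite_succ]
    exact splits_two_mul_X_mul_sub_derivative ih

/-! ### Power sums of the reciprocals `1 / (x - a)` -/

/-- The quotients `p^(j)(x) / p(x)`, `j ≤ 3`, in terms of the power sums `∑ (x - a)⁻¹ ^ i` over
the zeros `a` of `p` (Newton's identities). -/
theorem eval_derivatives_prod (s : Multiset ℝ) (x : ℝ) (hx : ∀ a ∈ s, x - a ≠ 0) :
    let p : ℝ[X] := (s.map (X - C ·)).prod
    let σ (i : ℕ) : ℝ := (s.map fun a ↦ (x - a)⁻¹ ^ i).sum
    (derivative p).eval x = p.eval x * σ 1 ∧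
    (derivative (derivative p)).eval x = p.eval x * (σ 1 ^ 2 - σ 2) ∧
    (derivative (derivative (derivative p))).eval x =
      p.eval x * (σ 1 ^ 3 - 3 * σ 1 * σ 2 + 2 * σ 3) := by
  induction s using Multiset.induction_on with
  | empty => simp
  | cons a s ih =>
    intro p σ
    have hxa : x - a ≠ 0 := hx a (Multiset.mem_cons_self a s)
    obtain ⟨h1, h2, h3⟩ := ih fun b hb ↦ hx b (Multiset.mem_cons_of_mem hb)
    set q : ℝ[X] := (s.map (X - C ·)).prod with hq
    set τ : ℕ → ℝ := fun i ↦ (s.map fun a ↦ (x - a)⁻¹ ^ i).sum with hτ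
    have hp : p = (X - C a) * q := by simp [p, hq]
    have hσ (i : ℕ) : σ i = (x - a)⁻¹ ^ i + τ i := by simp [σ, hτ]
    simp only [hp, hσ, derivative_mul, derivative_sub, derivative_X, derivative_C, sub_zero,
      one_mul, derivative_add, eval_add, eval_mul, eval_sub, eval_X, eval_C]
    rw [h3, h2, h1]
    refine ⟨?_, ?_, ?_⟩ <;> field_simp <;> ring

/-- Monotonicity of `ℓ^p` norms, `‖·‖₃ ≤ ‖·‖₂`, raised to the sixth power. -/
theorem sq_sum_cube_le_cube_sum_sq (s : Multiset ℝ) (f : ℝ → ℝ) :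
    0 ≤ (s.map fun a ↦ f a ^ 2).sum ∧
    (s.map fun a ↦ f a ^ 3).sum ^ 2 ≤ (s.map fun a ↦ f a ^ 2).sum ^ 3 := by
  induction s using Multiset.induction_on with
  | empty => simp
  | cons a s ih =>
    simp only [Multiset.map_cons, Multiset.sum_cons]
    obtain ⟨hA, hB⟩ := ih
    set A := (s.map fun a ↦ f a ^ 2).sum
    set B := (s.map fun a ↦ f a ^ 3).sum
    generalize f a = u
    refine ⟨by positivity, ?_⟩
    -- the cross term: `2Bu ≤ A² + Au²`, since `B² ≤ A³` and by AM-GM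
    have h : 2 * B * u ≤ A ^ 2 + A * u ^ 2 := by
      apply abs_le_of_sq_le_sq' _ (by positivity) |>.2
      nlinarith [mul_le_mul_of_nonneg_right hB (sq_nonneg u), sq_nonneg (A ^ 2 - A * u ^ 2)]
    nlinarith [mul_le_mul_of_nonneg_right h (sq_nonneg u), mul_nonneg (sq_nonneg A) (sq_nonneg u),
      mul_nonneg hA (sq_nonneg (u ^ 2))]

/-- At a critical point `x` of `H_k(x) e^{-x²/2}`, the reciprocals `1 / (x - a)` over the zeros of
`H_k` have first three power sums `x`, `2k - x²`, `x`; the two inequalities are those between the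
second and the third one. -/
theorem critical_point_bound (k : ℕ) (x : ℝ) (h0 : (physHermite k).eval x ≠ 0)
    (h1 : (derivative (physHermite k)).eval x = x * (physHermite k).eval x) :
    0 ≤ 2 * (k : ℝ) - x ^ 2 ∧ x ^ 2 ≤ (2 * (k : ℝ) - x ^ 2) ^ 3 := by
  set H := physHermite k with hH
  have hs := splits_physHermite k
  have hfac := hs.eq_prod_roots
  have hlc : H.leadingCoeff ≠ 0 := leadingCoeff_ne_zero.2 (physHermite_ne_zero k)
  have hroot : ∀ a ∈ H.roots, x - a ≠ 0 := by
    intro a ha hxa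
    rw [sub_eq_zero] at hxa
    exact h0 (hxa ▸ isRoot_of_mem_roots ha)
  have hode := physHermite_ode_s19 k
  have e2 : (derivative (derivative H)).eval x = (2 * x ^ 2 - 2 * k) * H.eval x := by
    rw [hode]
    simp only [eval_sub, eval_mul, eval_C, eval_X, ← hH, h1]
    ring
  have e3 : (derivative (derivative (derivative H))).eval x
      = x * (4 * x ^ 2 - 6 * k + 2) * H.eval x := by
    have := congrArg (fun p ↦ (derivative p).eval x) hode
    simp only [derivative_sub, derivative_mul, derivative_C, derivative_X, ← hH, eval_sub,
      eval_add, eval_mul, eval_C, eval_X, h1, e2, eval_zero, eval_one] at this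
    rw [this]
    ring
  obtain ⟨n1, n2, n3⟩ := eval_derivatives_prod H.roots x hroot
  obtain ⟨hA, hB⟩ := sq_sum_cube_le_cube_sum_sq H.roots fun a ↦ (x - a)⁻¹
  dsimp only at n1 n2 n3
  set p := (H.roots.map (X - C ·)).prod with hp
  have hHp : H = C H.leadingCoeff * p := hfac
  rw [hHp] at h0 h1 e2 e3
  simp only [derivative_C_mul, eval_mul, eval_C] at h0 h1 e2 e3
  rw [n1] at h1
  rw [n2] at e2
  rw [n3] at e3
  set σ₁ := (H.roots.map fun a ↦ (x - a)⁻¹ ^ 1).sum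
  set σ₂ := (H.roots.map fun a ↦ (x - a)⁻¹ ^ 2).sum
  set σ₃ := (H.roots.map fun a ↦ (x - a)⁻¹ ^ 3).sum
  have s1 : σ₁ = x := by
    apply mul_left_cancel₀ h0
    linear_combination h1
  have s2 : σ₂ = 2 * k - x ^ 2 := by
    apply mul_left_cancel₀ h0
    rw [s1] at e2
    linear_combination -e2
  have s3 : σ₃ = x := by
    apply mul_left_cancel₀ h0
    rw [s1, s2] at e3
    linear_combination e3 / 2
  rw [s2] at hA
  rw [s2, s3] at hB
  exact ⟨hA, hB⟩

/-! ### The maximum of `H_k(x)² e^{-x²}` -/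

theorem tendsto_eval_mul_exp_neg_sq_atTop (q : ℝ[X]) :
    Filter.Tendsto (fun x ↦ q.eval x * Real.exp (-x ^ 2)) Filter.atTop (nhds 0) := by
  have h := (q.tendsto_div_exp_atTop).norm.mul_const (Real.exp 1)
  rw [norm_zero, zero_mul] at h
  refine squeeze_zero_norm (fun x ↦ ?_) h
  rw [norm_mul, norm_div, Real.norm_eq_abs (Real.exp _), Real.norm_eq_abs (Real.exp _),
    Real.abs_exp, Real.abs_exp, div_mul_eq_mul_div, mul_div_assoc, ← Real.exp_sub]
  gcongr
  nlinarith [sq_nonneg (x - 1 / 2)]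

theorem tendsto_eval_mul_exp_neg_sq_cocompact (q : ℝ[X]) :
    Filter.Tendsto (fun x ↦ q.eval x * Real.exp (-x ^ 2)) (Filter.cocompact ℝ) (nhds 0) := by
  rw [cocompact_eq_atBot_atTop, Filter.tendsto_sup]
  refine ⟨?_, tendsto_eval_mul_exp_neg_sq_atTop q⟩
  have h := (tendsto_eval_mul_exp_neg_sq_atTop (q.comp (-X))).comp Filter.tendsto_neg_atBot_atTop
  refine h.congr fun x ↦ ?_
  simp

theorem exists_maximizer (k : ℕ) : ∃ w : ℝ,
    (∀ x : ℝ, ((physHermite k).eval x) ^ 2 * Real.exp (-x ^ 2) ≤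
      ((physHermite k).eval w) ^ 2 * Real.exp (-w ^ 2)) ∧
    (physHermite k).eval w ≠ 0 ∧
    (derivative (physHermite k)).eval w = w * (physHermite k).eval w := by
  set H := physHermite k with hH
  obtain ⟨x₀, hx₀⟩ : ∃ x, H.eval x ≠ 0 := by
    by_contra! h
    exact physHermite_ne_zero k (Polynomial.funext fun x ↦ by simp [← hH, h x])
  have hpos : 0 < H.eval x₀ ^ 2 * Real.exp (-x₀ ^ 2) := by positivity
  have hcont : Continuous fun x ↦ H.eval x ^ 2 * Real.exp (-x ^ 2) := by fun_prop
  have hlim := tendsto_eval_mul_exp_neg_sq_cocompact (H ^ 2)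
  simp only [eval_pow] at hlim
  obtain ⟨w, hw⟩ := hcont.exists_forall_ge' x₀ ((hlim.eventually_lt_const hpos).mono
    fun x hx ↦ hx.le)
  have hw0 : H.eval w ≠ 0 := by
    intro h
    have := hw x₀
    rw [h] at this
    simp only [ne_eq, OfNat.ofNat_ne_zero, not_false_eq_true, zero_pow, zero_mul] at this
    linarith
  refine ⟨w, hw, hw0, ?_⟩
  have hmax : IsLocalMax (fun x ↦ H.eval x ^ 2 * Real.exp (-x ^ 2)) w :=
    Filter.Eventually.of_forall hw
  have hder := ((H.hasDerivAt w).pow 2).mul ((hasDerivAt_pow 2 w).neg.exp)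
  have h := hmax.hasDerivAt_eq_zero hder
  have h2 : (2 * H.eval w * Real.exp (-w ^ 2)) *
      ((derivative H).eval w - w * H.eval w) = 0 := by
    simp at h
    linear_combination h
  have h3 : 2 * H.eval w * Real.exp (-w ^ 2) ≠ 0 := by positivity
  linarith [(mul_eq_zero.1 h2).resolve_left h3]

/-! ### Monotonicity of `F_k G_k` and the value at `y₀` -/

theorem quartic_pos {c y : ℝ} (hc : 0 < c) (hy : 2 ≤ y) :
    0 < 4 * y ^ 4 - 12 * y ^ 3 + 9 * y ^ 2 + 5 * c * y - 6 * c := by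
  have h1 : 0 < c * (5 * y - 6) := mul_pos hc (by linarith)
  nlinarith [sq_nonneg (y * (2 * y - 3))]

/-- `log (F_k G_k)` as a function of `y`, with `c = 2k`. -/
noncomputable def logFG (c y : ℝ) : ℝ :=
  Real.log (2 * y ^ 2 - 4 * y + 3) - Real.log y / 2
    - Real.log (4 * y ^ 4 - 12 * y ^ 3 + 9 * y ^ 2 + 5 * c * y - 6 * c) / 2
    + 15 * (c - y) / (2 * y * (2 * y - 3) ^ 2)

theorem hasDerivAt_logFG {c y : ℝ} (hc : 0 < c) (hy : 2 ≤ y) :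
    HasDerivAt (logFG c)
      ((4 * y - 4) / (2 * y ^ 2 - 4 * y + 3) - 1 / (2 * y)
        - (16 * y ^ 3 - 36 * y ^ 2 + 18 * y + 5 * c) /
          (2 * (4 * y ^ 4 - 12 * y ^ 3 + 9 * y ^ 2 + 5 * c * y - 6 * c))
        - 15 * (y * (2 * y - 3) + (c - y) * (6 * y - 3)) / (2 * y ^ 2 * (2 * y - 3) ^ 3)) y := by
  have hy0 : y ≠ 0 := by linarith
  have hN : 2 * y ^ 2 - 4 * y + 3 ≠ 0 := by nlinarith
  have hW : 2 * y - 3 ≠ 0 := by linarith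
  have hQ := (quartic_pos hc hy).ne'
  have i := hasDerivAt_id' y
  have d1 : HasDerivAt (fun y : ℝ ↦ 2 * y ^ 2 - 4 * y + 3) (4 * y - 4) y := by
    refine ((((i.pow 2).const_mul 2).sub (i.const_mul 4)).add_const 3).congr_deriv ?_
    push_cast
    ring
  have d2 : HasDerivAt (fun y : ℝ ↦ 4 * y ^ 4 - 12 * y ^ 3 + 9 * y ^ 2 + 5 * c * y - 6 * c)
      (16 * y ^ 3 - 36 * y ^ 2 + 18 * y + 5 * c) y := by
    refine ((((((i.pow 4).const_mul 4).sub ((i.pow 3).const_mul 12)).add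
      ((i.pow 2).const_mul 9)).add (i.const_mul (5 * c))).sub_const (6 * c)).congr_deriv ?_
    push_cast
    ring
  have d3 : HasDerivAt (fun y : ℝ ↦ 15 * (c - y)) (-15) y := by
    exact ((i.const_sub c).const_mul 15).congr_deriv (by norm_num)
  have d4 : HasDerivAt (fun y : ℝ ↦ 2 * y * (2 * y - 3) ^ 2)
      (2 * (2 * y - 3) * (6 * y - 3)) y := by
    refine ((i.const_mul 2).mul (((i.const_mul 2).sub_const 3).pow 2)).congr_deriv ?_
    simp only [Pi.pow_apply]
    push_cast
    ring
  have hD : 2 * y * (2 * y - 3) ^ 2 ≠ 0 := by positivity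
  refine ((((d1.log hN).sub ((i.log hy0).div_const 2)).sub ((d2.log hQ).div_const 2)).add
    (d3.div d4 hD)).congr_deriv ?_
  field_simp
  ring

theorem deriv_logFG_nonpos {c y : ℝ} (hy : 2 ≤ y) (hyc : y ≤ c) :
    (4 * y - 4) / (2 * y ^ 2 - 4 * y + 3) - 1 / (2 * y)
        - (16 * y ^ 3 - 36 * y ^ 2 + 18 * y + 5 * c) /
          (2 * (4 * y ^ 4 - 12 * y ^ 3 + 9 * y ^ 2 + 5 * c * y - 6 * c))
        - 15 * (y * (2 * y - 3) + (c - y) * (6 * y - 3)) / (2 * y ^ 2 * (2 * y - 3) ^ 3) ≤ 0 := by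
  have hc : 0 < c := by linarith
  have hy0 : 0 < y := by linarith
  have hN : 0 < 2 * y ^ 2 - 4 * y + 3 := by nlinarith
  have hW : 0 < 2 * y - 3 := by linarith
  have hQ := quartic_pos hc hy
  set N := 2 * y ^ 2 - 4 * y + 3 with hNdef
  set W := 2 * y - 3 with hWdef
  set Q := 4 * y ^ 4 - 12 * y ^ 3 + 9 * y ^ 2 + 5 * c * y - 6 * c with hQdef
  have hform : (4 * y - 4) / N - 1 / (2 * y) - (16 * y ^ 3 - 36 * y ^ 2 + 18 * y + 5 * c) / (2 * Q)
        - 15 * (y * W + (c - y) * (6 * y - 3)) / (2 * y ^ 2 * W ^ 3)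
      = -(-(2 * y ^ 2 * W ^ 3 * (4 * y - 4) * Q) + y * W ^ 3 * N * Q
          + y ^ 2 * W ^ 3 * N * (16 * y ^ 3 - 36 * y ^ 2 + 18 * y + 5 * c)
          + 15 * N * Q * (y * W + (c - y) * (6 * y - 3))) / (2 * y ^ 2 * W ^ 3 * N * Q) := by
    field_simp
    ring
  rw [hform]
  apply div_nonpos_of_nonpos_of_nonneg _ (by positivity)
  rw [neg_nonpos, hNdef, hWdef, hQdef]
  -- as a polynomial in `s = y - 2` and `d = c - y`, the numerator has positive coefficients only
  obtain ⟨s, hs, rfl⟩ : ∃ s : ℝ, 0 ≤ s ∧ y = s + 2 := ⟨y - 2, by linarith, by ring⟩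
  obtain ⟨d, hd, rfl⟩ : ∃ d : ℝ, 0 ≤ d ∧ c = s + 2 + d := ⟨c - (s + 2), by linarith, by ring⟩
  ring_nf
  positivity

theorem antitoneOn_logFG {c : ℝ} (hc : 2 ≤ c) : AntitoneOn (logFG c) (Set.Icc 2 c) := by
  have hder : ∀ y ∈ Set.Icc 2 c, _ := fun y hy ↦ hasDerivAt_logFG (c := c) (by linarith) hy.1
  refine antitoneOn_of_deriv_nonpos (convex_Icc 2 c)
    (fun y hy ↦ (hder y hy).continuousAt.continuousWithinAt)
    (fun y hy ↦ (hder y (interior_subset hy)).differentiableAt.differentiableWithinAt)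
    fun y hy ↦ ?_
  have hy' := interior_subset hy
  rw [(hder y hy').deriv]
  exact deriv_logFG_nonpos hy'.1 hy'.2

theorem Fk_mul_Gk_eq_exp_logFG {k : ℕ} (hk : 0 < k) {y : ℝ} (hy : 2 ≤ y) :
    Fk k y * Gk k y = Real.exp (logFG (2 * k) y) := by
  have hk' : (0 : ℝ) < 2 * k := by positivity
  have hQ := quartic_pos hk' hy
  have hN : 0 < 2 * y ^ 2 - 4 * y + 3 := by nlinarith
  have hy0 : 0 < y := by linarith
  have e : 4 * y ^ 4 - 12 * y ^ 3 + 9 * y ^ 2 + 10 * k * y - 12 * k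
      = 4 * y ^ 4 - 12 * y ^ 3 + 9 * y ^ 2 + 5 * (2 * k) * y - 6 * (2 * k) := by ring
  rw [Fk, Gk, logFG, e, Real.exp_add, Real.sqrt_mul hy0.le, ← Real.log_sqrt hy0.le,
    ← Real.log_sqrt hQ.le, Real.exp_sub, Real.exp_sub, Real.exp_log hN,
    Real.exp_log (Real.sqrt_pos.2 hy0), Real.exp_log (Real.sqrt_pos.2 hQ), div_div]

/-- The estimate `K ≤ y + 1/(3y)` for `K = (y³ + y)^{1/3}`. -/
theorem cube_root_bound {y K : ℝ} (h : y ^ 3 + y = K ^ 3) : 3 * y * K ≤ 3 * y ^ 2 + 1 := by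
  have h3 : (3 * y * K) ^ 3 ≤ (3 * y ^ 2 + 1) ^ 3 := by
    rw [mul_pow, ← h]
    nlinarith [sq_nonneg y]
  exact (Odd.pow_le_pow (by decide)).1 h3

/-- Here `K = (2k)^{1/3}` and `S = (2k)^{1/6}`. -/
theorem Fk_bound {k : ℕ} {y K S : ℝ} (hy : 2 ≤ y) (hyk : y ^ 3 + y = 2 * k)
    (hK3 : K ^ 3 = 2 * k) (hS2 : S ^ 2 = K) : S * Fk k y < 2 / 3 := by
  have hy0 : 0 < y := by linarith
  have hKy := cube_root_bound (hyk.trans hK3.symm)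
  set D := y * (4 * y ^ 4 - 12 * y ^ 3 + 9 * y ^ 2 + 10 * k * y - 12 * k) with hD
  have hDy : D = y ^ 2 * (9 * y ^ 3 - 18 * y ^ 2 + 14 * y - 6) := by
    rw [hD]
    linear_combination -(5 * y ^ 2 - 6 * y) * hyk
  have hDpos : 0 < D := by
    rw [hDy]
    obtain ⟨s, hs, rfl⟩ : ∃ s : ℝ, 0 ≤ s ∧ y = s + 2 := ⟨y - 2, by linarith, by ring⟩
    ring_nf
    positivity
  have hpoly : 9 * (3 * y ^ 2 + 1) * (2 * y ^ 2 - 4 * y + 3) ^ 2 < 12 * y * D := by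
    rw [hDy, ← sub_pos]
    obtain ⟨s, hs, rfl⟩ : ∃ s : ℝ, 0 ≤ s ∧ y = s + 2 := ⟨y - 2, by linarith, by ring⟩
    ring_nf
    positivity
  have hmain : (3 / 2 * S * (2 * y ^ 2 - 4 * y + 3)) ^ 2 < D := by
    rw [mul_pow, mul_pow, hS2]
    have := mul_le_mul_of_nonneg_right hKy (sq_nonneg (2 * y ^ 2 - 4 * y + 3))
    have h2 : 0 < 12 * y * (D - (3 / 2) ^ 2 * K * (2 * y ^ 2 - 4 * y + 3) ^ 2) := by nlinarith
    linarith [(mul_pos_iff_of_pos_left (by positivity)).1 h2]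
  have h := Real.lt_sqrt_of_sq_lt hmain
  rw [Fk, ← hD, ← mul_div_assoc, div_lt_iff₀ (Real.sqrt_pos.2 hDpos)]
  linarith

theorem Gk_bound {k : ℕ} {y K : ℝ} (hy : 2 ≤ y) (hyk : y ^ 3 + y = 2 * k)
    (hK3 : K ^ 3 = 2 * k) (hK : 9 < 4 * K) :
    Gk k y ≤ Real.exp (15 / 8 * (1 + 12 / (4 * K - 9))) := by
  have hy0 : 0 < y := by linarith
  have hW : 0 < 2 * y - 3 := by linarith
  have hKy := cube_root_bound (hyk.trans hK3.symm)
  have hyK : y ≤ K := by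
    refine le_of_pow_le_pow_left₀ (n := 3) (by norm_num) (by linarith) ?_
    linarith
  rw [Gk, Real.exp_le_exp]
  have e : 15 * (2 * k - y) / (2 * y * (2 * y - 3) ^ 2)
      = 15 / 8 * (1 + (12 * y - 9) / (2 * y - 3) ^ 2) := by
    rw [← hyk, add_sub_cancel_right]
    generalize hW' : 2 * y - 3 = W at hW
    field_simp
    rw [← hW']
    ring
  rw [e]
  gcongr 15 / 8 * (1 + ?_)
  rw [div_le_div_iff₀ (by positivity) (by linarith)]
  nlinarith

/-! ### The upper bound -/

theorem Ck_pos {k : ℕ} (hk : 6 ≤ k) : 0 < Ck k := by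
  have hk' : (6 : ℝ) ≤ k := by exact_mod_cast hk
  have h1 : 0 < Real.sqrt (4 * k - 2) := Real.sqrt_pos.2 (by linarith)
  have h2 : 0 < Real.sqrt (8 * (k : ℝ) ^ 2 - 8 * k + 3) := Real.sqrt_pos.2 (by nlinarith)
  have h3 : 0 < Real.sqrt (16 * (k : ℝ) ^ 2 - 16 * k + 6) := Real.sqrt_pos.2 (by nlinarith)
  have h4 : 0 < Real.sqrt (2 * (k : ℝ) - 1) := Real.sqrt_pos.2 (by linarith)
  unfold Ck
  split_ifs <;> positivity

/-- The point `y₀` for `c = 2k`. Cardano's formula gives it as `m² - 1/(3m²)` with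
`m⁶ = k + √(k² + 1/27)`, but only the cubic equation matters. -/
theorem exists_cubic_root {c : ℝ} (hc : 12 ≤ c) : ∃ y : ℝ, 2 ≤ y ∧ y ≤ c ∧ y ^ 3 + y = c := by
  have hcont : ContinuousOn (fun y : ℝ ↦ y ^ 3 + y) (Set.Icc 2 c) := by fun_prop
  obtain ⟨y, hy, h⟩ := intermediate_value_Icc (by linarith) hcont
    (show c ∈ Set.Icc _ _ from ⟨by norm_num; linarith, le_add_of_nonneg_left (by positivity)⟩)
  exact ⟨y, hy.1, hy.2, h⟩

theorem main_upper_bound (k : ℕ) (hk : 6 ≤ k)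
    (hupper : ∀ x : ℝ, x ^ 2 < 2 * (k : ℝ) - 3 / 2 →
      ((physHermite k).eval x) ^ 2 * Real.exp (-x ^ 2) ≤
        Ck k * Fk k (2 * k - x ^ 2) * Gk k (2 * k - x ^ 2)) :
    ∀ x : ℝ, (2 * (k : ℝ)) ^ ((1 : ℝ) / 6) *
        (((physHermite k).eval x) ^ 2 * Real.exp (-x ^ 2)) <
      2 / 3 * Ck k *
        Real.exp (15 / 8 * (1 + 12 / (4 * (2 * (k : ℝ)) ^ ((1 : ℝ) / 3) - 9))) := by
  intro x
  have hk' : (12 : ℝ) ≤ 2 * k := by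
    have : (6 : ℝ) ≤ k := by exact_mod_cast hk
    linarith
  have hk0 : (0 : ℝ) < 2 * k := by linarith
  set K := (2 * (k : ℝ)) ^ ((1 : ℝ) / 3) with hKdef
  set S := (2 * (k : ℝ)) ^ ((1 : ℝ) / 6) with hSdef
  have hK : 0 < K := Real.rpow_pos_of_pos hk0 _
  have hS : 0 < S := Real.rpow_pos_of_pos hk0 _
  have hK3 : K ^ 3 = 2 * k := by
    rw [hKdef, ← Real.rpow_mul_natCast hk0.le]
    norm_num
  have hS2 : S ^ 2 = K := by
    rw [hSdef, hKdef, ← Real.rpow_mul_natCast hk0.le]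
    norm_num
  -- `(9/4)³ = 11.39… < 12 ≤ K³`
  have hK9 : 9 < 4 * K := by
    have : (9 / 4 : ℝ) < K := lt_of_pow_lt_pow_left₀ 3 hK.le (by rw [hK3]; linarith)
    linarith
  obtain ⟨w, hmax, hw0, hcrit⟩ := exists_maximizer k
  obtain ⟨hv0, hcube⟩ := critical_point_bound k w hw0 hcrit
  set v := 2 * (k : ℝ) - w ^ 2 with hv
  have hvk : v ≤ 2 * k := by nlinarith
  obtain ⟨y, hy2, hyk, hy⟩ := exists_cubic_root hk'
  have hyv : y ≤ v := by
    by_contra! h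
    have : v ^ 3 ≤ y ^ 3 := by gcongr
    linarith
  have hFG : Fk k v * Gk k v ≤ Fk k y * Gk k y := by
    rw [Fk_mul_Gk_eq_exp_logFG (by omega) hy2, Fk_mul_Gk_eq_exp_logFG (by omega) (hy2.trans hyv),
      Real.exp_le_exp]
    exact antitoneOn_logFG (by linarith) ⟨hy2, hyk⟩ ⟨hy2.trans hyv, hvk⟩ hyv
  have hC := Ck_pos hk
  calc S * (((physHermite k).eval x) ^ 2 * Real.exp (-x ^ 2))
      ≤ S * (Ck k * Fk k v * Gk k v) := by
        exact mul_le_mul_of_nonneg_left ((hmax x).trans (hupper w (by linarith))) hS.le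
    _ = S * Ck k * (Fk k v * Gk k v) := by ring
    _ ≤ S * Ck k * (Fk k y * Gk k y) := by gcongr
    _ = Ck k * (S * Fk k y) * Gk k y := by ring
    _ < Ck k * (2 / 3) * Gk k y := by
        have := Fk_bound hy2 hy hK3 hS2
        have : 0 < Gk k y := Real.exp_pos _
        gcongr
    _ ≤ Ck k * (2 / 3) * Real.exp (15 / 8 * (1 + 12 / (4 * K - 9))) := by
        gcongr
        exact Gk_bound hy2 hy hK3 hK9
    _ = 2 / 3 * Ck k * Real.exp (15 / 8 * (1 + 12 / (4 * K - 9))) := by ring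
end
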